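/- arXiv:2103.03134 — 2 statements merged into one kernel-verified Lean document; each statement's English description precedes it below -/
import Mathlib

section
/- Fix T > 0, R > 0, an integer γ ≥ 2, constants θ > 0, β > 0, and a point (t̄, x̄) ∈ [0,T] × ℝ^d with ‖x̄‖ < R. Let u, w : [0,T] × ℝ^d → ℝ be continuous and assume that u − w attains its maximum over [0,T] × B̄_R at (t̄, x̄). For ε > 0 define Φ_ε(t,x,y) = u(t,x) − w(t,y) − (1/(2ε))‖x−y‖^{2γ} − θ(‖x−x̄‖^{2γ+2} + ‖y−x̄‖^{2γ+2}) − β(t−t̄)² for (t,x,y) ∈ [0,T] × B̄_R × B̄_R. Let (ε_n) be positive reals with ε_n → 0 and (t_n, x_n, y_n) maximizers of Φ_{ε_n} over [0,T] × B̄_R × B̄_R. Then (t_n, x_n, y_n) → (t̄, x̄, x̄) as n → ∞, and Φ_{ε_n}(t_n, x_n, y_n) → u(t̄, x̄) − w(t̄, x̄). -/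
open Set Filter

/-!
Along the penalized maximizers the penalty times its weight stays bounded, because the penalized
maximum is at least the value `F z` at a point `z` where the penalty vanishes, while `F` is bounded
above on the compact domain. Since the weights blow up, every cluster point of the maximizers is a
zero of the penalty, and by upper semicontinuity `F` is at least `F z` there. Hence `z` is the only
cluster point as soon as it is the strict maximizer of `F` on the zero set of the penalty. For the
doubling of variables, that zero set is the diagonal, where the terms with `θ` and `β` turn the
maximizer `(t̄, x̄)` of `u - w` into a strict one.
-/

open scoped Topology

section PenaltyMethod

variable {X ι : Type*} [TopologicalSpace X] {K : Set X} {z : X} {l : Filter ι} {p : ι → X}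

theorem le_of_mapClusterPt_of_lowerSemicontinuousWithinAt {β : Type*} [LinearOrder β] {f : X → β}
    {b : β} (hf : LowerSemicontinuousWithinAt f K z) (hz : MapClusterPt z l p)
    (hpK : ∀ᶠ i in l, p i ∈ K) (hpb : ∀ᶠ i in l, f (p i) ≤ b) : f z ≤ b := by
  by_contra! hbz
  have hfreq : ∃ᶠ i in l, p i ∈ K → b < f (p i) :=
    hz.frequently (eventually_nhdsWithin_iff.mp (hf b hbz))
  obtain ⟨i, hlt, hiK, hle⟩ := (hfreq.and_eventually (hpK.and hpb)).exists
  exact (hlt hiK).not_ge hle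

theorem ge_of_mapClusterPt_of_upperSemicontinuousWithinAt {β : Type*} [LinearOrder β] {f : X → β}
    {b : β} (hf : UpperSemicontinuousWithinAt f K z) (hz : MapClusterPt z l p)
    (hpK : ∀ᶠ i in l, p i ∈ K) (hpb : ∀ᶠ i in l, b ≤ f (p i)) : b ≤ f z :=
  le_of_mapClusterPt_of_lowerSemicontinuousWithinAt (β := βᵒᵈ) hf hz hpK hpb

variable {F P : X → ℝ} {c : ι → ℝ}

theorem tendsto_zero_of_le_sub_mul {f g : ι → ℝ} {a C : ℝ} (hf : ∀ᶠ i in l, f i ≤ C)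
    (hg : ∀ᶠ i in l, 0 ≤ g i) (hc : Tendsto c l atTop)
    (hfg : ∀ᶠ i in l, a ≤ f i - c i * g i) : Tendsto g l (𝓝 0) := by
  refine squeeze_zero' hg ?_ (hc.const_div_atTop (C - a))
  filter_upwards [hf, hfg, hc.eventually_gt_atTop 0] with i hfC hfg hc
  rw [le_div_iff₀' hc]
  linarith

theorem tendsto_of_le_penalized (hK : IsCompact K) (hF : UpperSemicontinuousOn F K)
    (hP : LowerSemicontinuousOn P K) (hP_nonneg : ∀ x ∈ K, 0 ≤ P x)
    (hz : ∀ x ∈ K, P x = 0 → F z ≤ F x → x = z) (hc : Tendsto c l atTop)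
    (hpK : ∀ᶠ i in l, p i ∈ K) (hp : ∀ᶠ i in l, F z ≤ F (p i) - c i * P (p i)) :
    Tendsto p l (𝓝 z) := by
  obtain ⟨C, hC⟩ := hF.bddAbove_of_isCompact hK
  have hPp_nonneg : ∀ᶠ i in l, 0 ≤ P (p i) := hpK.mono fun i hi => hP_nonneg _ hi
  have hPp : Tendsto (fun i => P (p i)) l (𝓝 0) :=
    tendsto_zero_of_le_sub_mul (hpK.mono fun i hi => hC (mem_image_of_mem F hi)) hPp_nonneg hc hp
  have hFp : ∀ᶠ i in l, F z ≤ F (p i) := by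
    filter_upwards [hp, hPp_nonneg, hc.eventually_ge_atTop 0] with i hi hPi hci
    exact hi.trans (sub_le_self _ (mul_nonneg hci hPi))
  refine hK.tendsto_nhds_of_unique_mapClusterPt hpK fun q hqK hq => ?_
  have hPq : P q ≤ 0 := le_of_forall_gt_imp_ge_of_dense fun δ hδ =>
    le_of_mapClusterPt_of_lowerSemicontinuousWithinAt (hP q hqK) hq hpK (hPp.eventually_le_const hδ)
  have hFq : F z ≤ F q :=
    ge_of_mapClusterPt_of_upperSemicontinuousWithinAt (hF q hqK) hq hpK hFp
  exact hz q hqK (hPq.antisymm (hP_nonneg q hqK)) hFq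

theorem tendsto_penalized_of_tendsto (hzK : z ∈ K) (hF : UpperSemicontinuousOn F K)
    (hP_nonneg : ∀ x ∈ K, 0 ≤ P x) (hc : ∀ᶠ i in l, 0 ≤ c i)
    (hpK : ∀ᶠ i in l, p i ∈ K) (hp : ∀ᶠ i in l, F z ≤ F (p i) - c i * P (p i))
    (hpz : Tendsto p l (𝓝 z)) :
    Tendsto (fun i => F (p i) - c i * P (p i)) l (𝓝 (F z)) := by
  refine tendsto_order.mpr ⟨fun a ha => hp.mono fun i hi => ha.trans_le hi, fun b hb => ?_⟩
  have hFp : ∀ᶠ i in l, F (p i) < b :=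
    (tendsto_nhdsWithin_iff.mpr ⟨hpz, hpK⟩).eventually (hF z hzK b hb)
  filter_upwards [hFp, hpK, hc] with i hFi hiK hci
  exact (sub_le_self _ (mul_nonneg hci (hP_nonneg _ hiK))).trans_lt hFi

end PenaltyMethod

section DoublingOfVariables

variable {E : Type*} [NormedAddCommGroup E]

/-- The difference `u(t,x) - w(t,y)` of the doubled variables, localized near `(t₀, x₀, x₀)`: the
part of the penalized functional that does not depend on the coupling parameter `ε`. -/
noncomputable def localizedDifference (u w : ℝ × E → ℝ) (k : ℕ) (θ β t₀ : ℝ) (x₀ : E)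
    (q : ℝ × E × E) : ℝ :=
  u (q.1, q.2.1) - w (q.1, q.2.2) - θ * (‖q.2.1 - x₀‖ ^ k + ‖q.2.2 - x₀‖ ^ k)
    - β * (q.1 - t₀) ^ 2

/-- The functional `Φ_ε` of the doubling of variables at `q = (t, x, y)`: the localized difference
with the coupling penalty `‖x - y‖ ^ m / (2ε)`. The paper takes `m = 2γ` and `k = 2γ + 2`. -/
noncomputable def penalizedDifference (u w : ℝ × E → ℝ) (m k : ℕ) (θ β t₀ : ℝ) (x₀ : E)
    (ε : ℝ) (q : ℝ × E × E) : ℝ :=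
  u (q.1, q.2.1) - w (q.1, q.2.2) - (1 / (2 * ε)) * ‖q.2.1 - q.2.2‖ ^ m
    - θ * (‖q.2.1 - x₀‖ ^ k + ‖q.2.2 - x₀‖ ^ k) - β * (q.1 - t₀) ^ 2

variable {u w : ℝ × E → ℝ} {m k : ℕ} {θ β t₀ : ℝ} {x₀ : E}

theorem penalizedDifference_eq_sub (ε : ℝ) (q : ℝ × E × E) :
    penalizedDifference u w m k θ β t₀ x₀ ε q =
      localizedDifference u w k θ β t₀ x₀ q - (1 / (2 * ε)) * ‖q.2.1 - q.2.2‖ ^ m := by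
  unfold penalizedDifference localizedDifference
  ring

theorem penalizedDifference_diag (hm : m ≠ 0) (ε t : ℝ) (x : E) :
    penalizedDifference u w m k θ β t₀ x₀ ε (t, x, x) =
      localizedDifference u w k θ β t₀ x₀ (t, x, x) := by
  simp [penalizedDifference_eq_sub, hm]

theorem localizedDifference_self (hk : k ≠ 0) :
    localizedDifference u w k θ β t₀ x₀ (t₀, x₀, x₀) = u (t₀, x₀) - w (t₀, x₀) := by
  simp [localizedDifference, hk]

theorem upperSemicontinuousOn_localizedDifference {I : Set ℝ} {K : Set E}
    (hu : UpperSemicontinuousOn u (I ×ˢ K)) (hw : LowerSemicontinuousOn w (I ×ˢ K)) :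
    UpperSemicontinuousOn (localizedDifference u w k θ β t₀ x₀) (I ×ˢ K ×ˢ K) := by
  have hu' : UpperSemicontinuousOn (fun q : ℝ × E × E => u (q.1, q.2.1)) (I ×ˢ K ×ˢ K) :=
    hu.comp (by fun_prop) fun q hq => ⟨hq.1, hq.2.1⟩
  have hw' : UpperSemicontinuousOn (fun q : ℝ × E × E => -w (q.1, q.2.2)) (I ×ˢ K ×ˢ K) :=
    continuous_neg.comp_lowerSemicontinuousOn_antitone
      (hw.comp (by fun_prop) fun q hq => ⟨hq.1, hq.2.2⟩) fun _ _ => neg_le_neg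
  have hloc : Continuous fun q : ℝ × E × E =>
      -(θ * (‖q.2.1 - x₀‖ ^ k + ‖q.2.2 - x₀‖ ^ k)) - β * (q.1 - t₀) ^ 2 := by fun_prop
  have hsplit : localizedDifference u w k θ β t₀ x₀ = fun q =>
      u (q.1, q.2.1) + -w (q.1, q.2.2) +
        (-(θ * (‖q.2.1 - x₀‖ ^ k + ‖q.2.2 - x₀‖ ^ k)) - β * (q.1 - t₀) ^ 2) := by
    funext q
    unfold localizedDifference
    ring
  rw [hsplit]
  exact (hu'.add hw').add (hloc.upperSemicontinuous.upperSemicontinuousOn _)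

theorem eq_of_le_localizedDifference_diag (hθ : 0 < θ) (hβ : 0 < β) {t : ℝ} {x : E}
    (hmax : u (t, x) - w (t, x) ≤ u (t₀, x₀) - w (t₀, x₀))
    (hle : u (t₀, x₀) - w (t₀, x₀) ≤ localizedDifference u w k θ β t₀ x₀ (t, x, x)) :
    t = t₀ ∧ x = x₀ := by
  simp only [localizedDifference] at hle
  have hθx : 0 ≤ θ * (‖x - x₀‖ ^ k + ‖x - x₀‖ ^ k) := by positivity
  have hβt : 0 ≤ β * (t - t₀) ^ 2 := by positivity
  have ht : (t - t₀) ^ 2 = 0 := by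
    refine (mul_eq_zero.mp (?_ : β * (t - t₀) ^ 2 = 0)).resolve_left hβ.ne'
    linarith
  have hx : ‖x - x₀‖ ^ k + ‖x - x₀‖ ^ k = 0 := by
    refine (mul_eq_zero.mp (?_ : θ * _ = 0)).resolve_left hθ.ne'
    linarith
  exact ⟨sub_eq_zero.mp (eq_zero_of_pow_eq_zero ht),
    sub_eq_zero.mp (norm_eq_zero.mp (eq_zero_of_pow_eq_zero (n := k) (by linarith)))⟩

theorem stmt_9_general {ι : Type*} {l : Filter ι} {I : Set ℝ} {K : Set E} (hI : IsCompact I)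
    (hK : IsCompact K) (hm : m ≠ 0) (hk : k ≠ 0) (hθ : 0 < θ) (hβ : 0 < β)
    (ht₀ : t₀ ∈ I) (hx₀ : x₀ ∈ K)
    (hu : UpperSemicontinuousOn u (I ×ˢ K)) (hw : LowerSemicontinuousOn w (I ×ˢ K))
    (hmax : ∀ t ∈ I, ∀ x ∈ K, u (t, x) - w (t, x) ≤ u (t₀, x₀) - w (t₀, x₀))
    {ε : ι → ℝ} (hε : Tendsto ε l (𝓝[>] 0)) {p : ι → ℝ × E × E}
    (hpD : ∀ᶠ i in l, p i ∈ I ×ˢ K ×ˢ K)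
    (hp : ∀ᶠ i in l, penalizedDifference u w m k θ β t₀ x₀ (ε i) (t₀, x₀, x₀) ≤
      penalizedDifference u w m k θ β t₀ x₀ (ε i) (p i)) :
    Tendsto p l (𝓝 (t₀, x₀, x₀)) ∧
      Tendsto (fun i => penalizedDifference u w m k θ β t₀ x₀ (ε i) (p i)) l
        (𝓝 (u (t₀, x₀) - w (t₀, x₀))) := by
  have hF := upperSemicontinuousOn_localizedDifference (k := k) (θ := θ) (β := β) (t₀ := t₀)
    (x₀ := x₀) hu hw
  have hP : Continuous fun q : ℝ × E × E => ‖q.2.1 - q.2.2‖ ^ m := by fun_prop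
  have hP_nonneg (q : ℝ × E × E) (_ : q ∈ I ×ˢ K ×ˢ K) : 0 ≤ ‖q.2.1 - q.2.2‖ ^ m := by positivity
  have hc : Tendsto (fun i => 1 / (2 * ε i)) l atTop := by
    simpa [mul_comm] using hε.inv_tendsto_nhdsGT_zero.atTop_mul_const (r := (2⁻¹ : ℝ)) (by simp)
  simp only [penalizedDifference_diag hm, penalizedDifference_eq_sub (m := m) _ (p _)] at hp ⊢
  have hstrict : ∀ q ∈ I ×ˢ K ×ˢ K, ‖q.2.1 - q.2.2‖ ^ m = 0 →
      localizedDifference u w k θ β t₀ x₀ (t₀, x₀, x₀) ≤ localizedDifference u w k θ β t₀ x₀ q →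
      q = (t₀, x₀, x₀) := by
    rintro ⟨t, x, y⟩ ⟨ht, hx, -⟩ hxy hle
    obtain rfl : x = y := sub_eq_zero.mp (norm_eq_zero.mp (eq_zero_of_pow_eq_zero hxy))
    rw [localizedDifference_self hk] at hle
    obtain ⟨rfl, rfl⟩ := eq_of_le_localizedDifference_diag hθ hβ (hmax t ht x hx) hle
    rfl
  have hpz := tendsto_of_le_penalized (hI.prod (hK.prod hK)) hF
    (hP.lowerSemicontinuous.lowerSemicontinuousOn _) hP_nonneg hstrict hc hpD hp
  have hval := tendsto_penalized_of_tendsto (mk_mem_prod ht₀ (mk_mem_prod hx₀ hx₀)) hF hP_nonneg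
    (hc.eventually_ge_atTop 0) hpD hp hpz
  exact ⟨hpz, by rwa [localizedDifference_self hk] at hval⟩

end DoublingOfVariables

/-- Step (5.36) of the comparison proof: if `u − w` attains its maximum over `[0,T] × B̄_R`
at `(t̄, x̄)`, then the maximizers `(t_n, x_n, y_n)` of the penalized functions `Φ_{ε_n}`
converge to `(t̄, x̄, x̄)` and the penalized maxima converge to `(u − w)(t̄, x̄)`. -/
theorem stmt_9 {d : ℕ} (T R : ℝ) (hT : 0 < T) (hR : 0 < R) (γ : ℕ) (hγ : 2 ≤ γ)
    (θ β : ℝ) (hθ : 0 < θ) (hβ : 0 < β)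
    (tb : ℝ) (xb : EuclideanSpace ℝ (Fin d)) (htb : tb ∈ Icc (0 : ℝ) T) (hxb : ‖xb‖ < R)
    (u w : ℝ × EuclideanSpace ℝ (Fin d) → ℝ)
    (hu : ContinuousOn u (Icc 0 T ×ˢ (univ : Set (EuclideanSpace ℝ (Fin d)))))
    (hw : ContinuousOn w (Icc 0 T ×ˢ (univ : Set (EuclideanSpace ℝ (Fin d)))))
    (hmax : ∀ t ∈ Icc (0 : ℝ) T, ∀ x ∈ Metric.closedBall (0 : EuclideanSpace ℝ (Fin d)) R,
      u (t, x) - w (t, x) ≤ u (tb, xb) - w (tb, xb))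
    (Φ : ℝ → ℝ × EuclideanSpace ℝ (Fin d) × EuclideanSpace ℝ (Fin d) → ℝ)
    (hΦ : ∀ (ε : ℝ) (p : ℝ × EuclideanSpace ℝ (Fin d) × EuclideanSpace ℝ (Fin d)),
      Φ ε p = u (p.1, p.2.1) - w (p.1, p.2.2) - (1 / (2 * ε)) * ‖p.2.1 - p.2.2‖ ^ (2 * γ)
        - θ * (‖p.2.1 - xb‖ ^ (2 * γ + 2) + ‖p.2.2 - xb‖ ^ (2 * γ + 2))
        - β * (p.1 - tb) ^ 2)
    (D : Set (ℝ × EuclideanSpace ℝ (Fin d) × EuclideanSpace ℝ (Fin d)))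
    (hD : D = Icc (0 : ℝ) T ×ˢ Metric.closedBall (0 : EuclideanSpace ℝ (Fin d)) R ×ˢ
      Metric.closedBall (0 : EuclideanSpace ℝ (Fin d)) R)
    (ε : ℕ → ℝ) (hεpos : ∀ n, 0 < ε n) (hε0 : Tendsto ε atTop (nhds 0))
    (p : ℕ → ℝ × EuclideanSpace ℝ (Fin d) × EuclideanSpace ℝ (Fin d))
    (hpD : ∀ n, p n ∈ D) (hpmax : ∀ n, ∀ q ∈ D, Φ (ε n) q ≤ Φ (ε n) (p n)) :
    Tendsto p atTop (nhds (tb, xb, xb)) ∧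
      Tendsto (fun n => Φ (ε n) (p n)) atTop (nhds (u (tb, xb) - w (tb, xb))) := by
  obtain rfl : Φ = penalizedDifference u w (2 * γ) (2 * γ + 2) θ β tb xb := funext₂ hΦ
  subst hD
  have hxb_mem : xb ∈ Metric.closedBall 0 R := mem_closedBall_zero_iff.mpr hxb.le
  have hsub : Icc 0 T ×ˢ Metric.closedBall (0 : EuclideanSpace ℝ (Fin d)) R ⊆ Icc 0 T ×ˢ univ :=
    prod_mono_right (subset_univ _)
  exact stmt_9_general isCompact_Icc (isCompact_closedBall 0 R) (by lia) (by lia) hθ hβ htb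
    hxb_mem (hu.mono hsub).upperSemicontinuousOn (hw.mono hsub).lowerSemicontinuousOn hmax
    (tendsto_nhdsWithin_iff.mpr ⟨hε0, .of_forall hεpos⟩) (.of_forall hpD)
    (.of_forall fun n => hpmax n _ ⟨htb, hxb_mem, hxb_mem⟩)
end

section
/- Let σ : [0,T] × ℝ^d → ℝ^{d×d} satisfy ‖σ(t,x) − σ(t,y)‖_F ≤ L‖x−y‖ and ‖σ(t,x)‖_F ≤ b for all t ∈ [0,T] and x, y ∈ ℝ^d. Let X and Y be d×d real symmetric matrices and α, β ≥ 0 such that α[[I_d, −I_d], [−I_d, I_d]] + β I_{2d} − [[X, 0], [0, −Y]] is positive semidefinite. Then for all t ∈ [0,T] and x, y ∈ ℝ^d: (1/2)(Tr(σ(t,x)ᵀ X σ(t,x)) − Tr(σ(t,y)ᵀ Y σ(t,y))) ≤ (α L²/2)‖x − y‖² + β b². -/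
open Matrix Set

/-!
Conjugating the block inequality by the column of blocks `[σ(x); σ(y)]` keeps it positive
semidefinite, so the result has nonnegative trace. Under this conjugation `[[1, -1], [-1, 1]]`
becomes the Gram matrix of `σ(x) - σ(y)`, whose trace is the squared Frobenius norm bounded by the
Lipschitz hypothesis, while the identity matrix contributes only `‖σ(x)‖² + ‖σ(y)‖² ≤ 2 b²`.
-/

section BlockConjugation

variable {l m n R : Type*} [Fintype m] [Fintype n]

theorem conjTranspose_fromRows_mul_fromBlocks_mul_fromRows [Semiring R] [Star R]
    (A : Matrix m l R) (B : Matrix n l R) (P : Matrix m m R) (Q : Matrix m n R) (S : Matrix n m R)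
    (W : Matrix n n R) :
    (fromRows A B)ᴴ * fromBlocks P Q S W * fromRows A B =
      Aᴴ * P * A + Bᴴ * S * A + (Aᴴ * Q * B + Bᴴ * W * B) := by
  rw [conjTranspose_fromRows_eq_fromCols_conjTranspose, fromCols_mul_fromBlocks,
    fromCols_mul_fromRows, Matrix.add_mul, Matrix.add_mul]

theorem conjTranspose_fromRows_mul_fromBlocks_one_neg_one_mul_fromRows [Ring R] [StarAddMonoid R]
    [DecidableEq m] (A B : Matrix m l R) :
    (fromRows A B)ᴴ * (fromBlocks 1 (-1) (-1) 1 : Matrix (m ⊕ m) (m ⊕ m) R) * fromRows A B =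
      (A - B)ᴴ * (A - B) := by
  rw [conjTranspose_fromRows_mul_fromBlocks_mul_fromRows]
  simp only [conjTranspose_sub, Matrix.sub_mul, Matrix.mul_sub, Matrix.mul_one, Matrix.mul_neg,
    Matrix.neg_mul]
  abel

end BlockConjugation

section FrobeniusNorm

open scoped ComplexOrder Matrix.Norms.Frobenius

variable {m n 𝕜 : Type*} [Fintype m] [Fintype n]

theorem frobenius_norm_eq_sqrt {α : Type*} [SeminormedAddCommGroup α] (A : Matrix m n α) :
    ‖A‖ = √(∑ i, ∑ j, ‖A i j‖ ^ 2) := by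
  simp only [frobenius_norm_def, Real.sqrt_eq_rpow, Real.rpow_two]

variable [RCLike 𝕜]

theorem re_trace_conjTranspose_mul_self (A : Matrix m n 𝕜) :
    RCLike.re (Aᴴ * A).trace = ‖A‖ ^ 2 := by
  rw [frobenius_norm_eq_sqrt, Real.sq_sqrt (by positivity), Finset.sum_comm]
  simp only [trace, diag_apply, mul_apply, conjTranspose_apply, RCLike.star_def, RCLike.conj_mul,
    map_sum]
  norm_cast

variable [DecidableEq m] {α β : ℝ} {X Y : Matrix m m 𝕜}

theorem re_trace_sub_le_of_posSemidef
    (h : (α • fromBlocks (1 : Matrix m m 𝕜) (-1) (-1) 1 + β • (1 : Matrix (m ⊕ m) (m ⊕ m) 𝕜) -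
      fromBlocks X 0 0 (-Y)).PosSemidef) (A B : Matrix m n 𝕜) :
    RCLike.re ((Aᴴ * X * A).trace - (Bᴴ * Y * B).trace) ≤
      α * ‖A - B‖ ^ 2 + β * (‖A‖ ^ 2 + ‖B‖ ^ 2) := by
  have conjugated :
      (fromRows A B)ᴴ * (α • fromBlocks (1 : Matrix m m 𝕜) (-1) (-1) 1 +
        β • (1 : Matrix (m ⊕ m) (m ⊕ m) 𝕜) - fromBlocks X 0 0 (-Y)) * fromRows A B =
      α • ((A - B)ᴴ * (A - B)) + β • (Aᴴ * A + Bᴴ * B) - (Aᴴ * X * A - Bᴴ * Y * B) := by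
    rw [Matrix.mul_sub, Matrix.mul_add, Matrix.sub_mul, Matrix.add_mul, Matrix.mul_smul,
      Matrix.smul_mul, conjTranspose_fromRows_mul_fromBlocks_one_neg_one_mul_fromRows,
      Matrix.mul_smul, Matrix.smul_mul, ← fromBlocks_one,
      conjTranspose_fromRows_mul_fromBlocks_mul_fromRows,
      conjTranspose_fromRows_mul_fromBlocks_mul_fromRows]
    simp only [Matrix.mul_one, Matrix.mul_zero, Matrix.zero_mul, Matrix.mul_neg, Matrix.neg_mul,
      add_zero, zero_add, sub_eq_add_neg]
  have trace_re_nonneg :=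
    (RCLike.nonneg_iff.mp (h.conjTranspose_mul_mul_same (fromRows A B)).trace_nonneg).1
  rw [conjugated] at trace_re_nonneg
  simp only [trace_sub, trace_add, trace_smul, map_sub, map_add, RCLike.smul_re,
    re_trace_conjTranspose_mul_self] at trace_re_nonneg
  rw [map_sub]
  linarith

theorem stmt_12_general {E : Type*} [PseudoMetricSpace E] {L b : ℝ} (σ : E → Matrix m n 𝕜)
    (hσL : ∀ x y, ‖σ x - σ y‖ ≤ L * dist x y) (hσb : ∀ x, ‖σ x‖ ≤ b) (hα : 0 ≤ α) (hβ : 0 ≤ β)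
    (h : (α • fromBlocks (1 : Matrix m m 𝕜) (-1) (-1) 1 + β • (1 : Matrix (m ⊕ m) (m ⊕ m) 𝕜) -
      fromBlocks X 0 0 (-Y)).PosSemidef) (x y : E) :
    (1 / 2) * RCLike.re (((σ x)ᴴ * X * σ x).trace - ((σ y)ᴴ * Y * σ y).trace) ≤
      α * L ^ 2 / 2 * dist x y ^ 2 + β * b ^ 2 :=
  calc (1 / 2) * RCLike.re (((σ x)ᴴ * X * σ x).trace - ((σ y)ᴴ * Y * σ y).trace)
    _ ≤ (1 / 2) * (α * ‖σ x - σ y‖ ^ 2 + β * (‖σ x‖ ^ 2 + ‖σ y‖ ^ 2)) := by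
      gcongr
      exact re_trace_sub_le_of_posSemidef h (σ x) (σ y)
    _ ≤ (1 / 2) * (α * (L * dist x y) ^ 2 + β * (b ^ 2 + b ^ 2)) := by
      gcongr
      exacts [hσL x y, hσb x, hσb y]
    _ = α * L ^ 2 / 2 * dist x y ^ 2 + β * b ^ 2 := by ring

end FrobeniusNorm

/-- The estimate on `½ Tr[σ*Xσ − σ*Yσ]` used in the proof of the viscosity comparison theorem
(Theorem 5.1), for a Lipschitz and bounded diffusion coefficient `σ` (Frobenius norm) and
matrices `X`, `Y` satisfying the Crandall–Ishii block inequality. -/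
theorem stmt_12 {d : ℕ} (T : ℝ) (hT : 0 < T) (L b : ℝ)
    (σm : ℝ → EuclideanSpace ℝ (Fin d) → Matrix (Fin d) (Fin d) ℝ)
    (hσL : ∀ t ∈ Icc (0 : ℝ) T, ∀ x y : EuclideanSpace ℝ (Fin d),
      Real.sqrt (∑ i, ∑ j, (σm t x i j - σm t y i j) ^ 2) ≤ L * ‖x - y‖)
    (hσb : ∀ t ∈ Icc (0 : ℝ) T, ∀ x : EuclideanSpace ℝ (Fin d),
      Real.sqrt (∑ i, ∑ j, (σm t x i j) ^ 2) ≤ b)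
    (X Y : Matrix (Fin d) (Fin d) ℝ) (hX : X.IsSymm) (hY : Y.IsSymm)
    (α β : ℝ) (hα : 0 ≤ α) (hβ : 0 ≤ β)
    (h : (α • Matrix.fromBlocks (1 : Matrix (Fin d) (Fin d) ℝ) (-1) (-1) 1 +
        β • (1 : Matrix (Fin d ⊕ Fin d) (Fin d ⊕ Fin d) ℝ) -
        Matrix.fromBlocks X 0 0 (-Y)).PosSemidef) :
    ∀ t ∈ Icc (0 : ℝ) T, ∀ x y : EuclideanSpace ℝ (Fin d),
      (1 / 2) * (((σm t x)ᵀ * X * σm t x).trace - ((σm t y)ᵀ * Y * σm t y).trace) ≤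
        α * L ^ 2 / 2 * ‖x - y‖ ^ 2 + β * b ^ 2 := by
  intro t ht
  exact stmt_12_general (σm t)
    (fun x y ↦ by simpa [frobenius_norm_eq_sqrt, dist_eq_norm] using hσL t ht x y)
    (fun x ↦ by simpa [frobenius_norm_eq_sqrt] using hσb t ht x) hα hβ h
end
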